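/- (Schaefer fixed point theorem.) Let (E, ‖·‖_E) be a real Banach space and let T : E → E be a map that is continuous and compact (i.e. T maps bounded subsets of E into relatively compact subsets of E). If there exists a finite constant M such that for every λ ∈ [0,1] and every e ∈ E, the equation e = λ T(e) implies ‖e‖_E ≤ M, then there exists at least one e ∈ E with T(e) = e. -/

import Mathlib

section BrwHelpers
open MeasureTheory Metric Polynomial

/-- Evaluation at a point, as a ring homomorphism. -/
def brwEv {E : Type*} [TopologicalSpace E] (x : E) : C(E, ℝ) →+* ℝ :=
  (ContinuousMap.evalAlgHom ℝ ℝ x : C(E, ℝ) →+* ℝ)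

lemma brwEv_apply {E : Type*} [TopologicalSpace E] (x : E) (h : C(E, ℝ)) : brwEv x h = h x := rfl

lemma brw_polyInt {E : Type*} [TopologicalSpace E] [MeasurableSpace E] [BorelSpace E] [T2Space E]
    (μ : Measure E) [IsFiniteMeasureOnCompacts μ] [SecondCountableTopologyEither E ℝ]
    (B : Set E) (hB : IsCompact B) (q : C(E, ℝ)[X]) :
    ∃ P : ℝ[X], ∀ t : ℝ,
      ∫ x in B, eval₂ (brwEv x) t q ∂μ = P.eval t := by
  refine ⟨∑ i ∈ q.support, C (∫ x in B, q.coeff i x ∂μ) * X ^ i, fun t => ?_⟩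
  simp only [eval₂_eq_sum, Polynomial.sum]
  rw [integral_finsetSum]
  · simp [eval_finsetSum, integral_mul_const, brwEv_apply]
  · intro i _
    apply Integrable.mul_const
    exact ((q.coeff i).continuous.continuousOn.integrableOn_compact hB)

abbrev BrwE (n : ℕ) := EuclideanSpace ℝ (Fin n)

lemma brw_poly {n : ℕ} (f : BrwE n → BrwE n) (hf : ContDiff ℝ 1 f) (c : ℝ) (k : ℕ) :
    ∃ q : C(BrwE n, ℝ)[X], ∀ (t : ℝ) (x : BrwE n),
      eval₂ (brwEv x) t q =
        (1 - c * ‖x - t • f x‖ ^ 2) ^ k *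
          (ContinuousLinearMap.id ℝ (BrwE n) - t • fderiv ℝ f x).det := by
  let b := (EuclideanSpace.basisFun (Fin n) ℝ).toBasis
  have hc := hf.continuous
  have hd : Continuous (fderiv ℝ f) := hf.continuous_fderiv (by simp)
  let xi : Fin n → C(BrwE n, ℝ) := fun i => ⟨fun x => x i, by fun_prop⟩
  let fi : Fin n → C(BrwE n, ℝ) := fun i => ⟨fun x => f x i, by fun_prop⟩
  let D : Fin n → Fin n → C(BrwE n, ℝ) := fun i j => ⟨fun x => fderiv ℝ f x (b j) i, by fun_prop⟩
  let M : Matrix (Fin n) (Fin n) C(BrwE n, ℝ)[X] :=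
    Matrix.of fun i j => (1 : Matrix (Fin n) (Fin n) C(BrwE n, ℝ)[X]) i j - X * C (D i j)
  refine ⟨(1 - C (ContinuousMap.const _ c) * ∑ i, (C (xi i) - X * C (fi i)) ^ 2) ^ k * M.det, fun t x => ?_⟩
  rw [← coe_eval₂RingHom, map_mul, RingHom.map_det]
  congr 1
  · rw [EuclideanSpace.real_norm_sq_eq]
    simp [brwEv_apply, xi, fi, eval₂_finsetSum, eval₂_pow, eval₂_sub, eval₂_mul, mul_comm t]
  · rw [ContinuousLinearMap.det, ← LinearMap.det_toMatrix b]
    congr 1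
    ext i j
    by_cases h : i = j <;>
    simp [M, D, b, h, LinearMap.toMatrix_apply, brwEv_apply, Matrix.one_apply, mul_comm t]

lemma brw_small {n : ℕ} (f : BrwE n → BrwE n) (hf : ContDiff ℝ 1 f) (r : ℝ)
    (hs : ∀ x, x ∉ closedBall (0 : BrwE n) r → f x = 0) :
    ∃ t₀ > 0, ∀ t ∈ Set.Ioo (0 : ℝ) t₀, ∀ φ : BrwE n → ℝ,
      ∫ x in closedBall (0 : BrwE n) r, φ (x - t • f x) *
          (ContinuousLinearMap.id ℝ (BrwE n) - t • fderiv ℝ f x).det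
        = ∫ x in closedBall (0 : BrwE n) r, φ x := by
  have hcs : HasCompactSupport f := HasCompactSupport.intro (isCompact_closedBall _ _) hs
  obtain ⟨K, hK⟩ := ContDiff.lipschitzWith_of_hasCompactSupport hcs hf (by simp)
  have hdet : Continuous (fun A : BrwE n →L[ℝ] BrwE n => A.det) := ContinuousLinearMap.continuous_det
  have hev : ∀ᶠ A in nhds (ContinuousLinearMap.id ℝ (BrwE n)), 0 < A.det := by
    apply hdet.continuousAt.eventually
    apply lt_mem_nhds
    simp [ContinuousLinearMap.det]
  obtain ⟨δ, hδ, hδ'⟩ := Metric.eventually_nhds_iff.1 hev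
  have hK1 : (0:ℝ) < K + 1 := by positivity
  refine ⟨min δ 1 / (K + 1), by positivity, fun t ⟨ht0, ht1⟩ φ => ?_⟩
  rw [lt_div_iff₀ hK1, lt_min_iff] at ht1
  have htK : t * K < 1 := by nlinarith
  set g : BrwE n → BrwE n := fun x => x - t • f x with hg
  have hinj : Function.Injective g := by
    intro x y hxy
    have h1 : x - y = t • (f x - f y) := by
      simp only [hg] at hxy
      rw [smul_sub, sub_eq_sub_iff_sub_eq_sub.1 hxy]
    have h2 : ‖x - y‖ ≤ t * K * ‖x - y‖ := by
      calc ‖x - y‖ = t * ‖f x - f y‖ := by rw [h1, norm_smul, Real.norm_of_nonneg ht0.le]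
        _ ≤ t * (K * ‖x - y‖) := by
          gcongr
          simpa [dist_eq_norm] using hK.dist_le_mul x y
        _ = _ := by ring
    have h3 : ‖x - y‖ = 0 := by
      have := norm_nonneg (x - y)
      nlinarith
    exact sub_eq_zero.1 (norm_eq_zero.1 h3)
  have hsurj : Function.Surjective g := by
    intro y
    obtain ⟨τ, hτ⟩ : ∃ τ : NNReal, (τ : ℝ) = t := ⟨⟨t, ht0.le⟩, rfl⟩
    have hcon : ContractingWith (τ * K) (fun x => y + t • f x) := by
      refine ⟨by rw [← NNReal.coe_lt_coe]; simpa [hτ] using htK, ?_⟩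
      apply LipschitzWith.of_dist_le_mul
      intro a b
      simp only [dist_add_left, dist_smul₀, Real.norm_of_nonneg ht0.le]
      have := mul_le_mul_of_nonneg_left (hK.dist_le_mul a b) ht0.le
      simpa [mul_assoc, hτ] using this
    refine ⟨hcon.fixedPoint _, ?_⟩
    have := hcon.fixedPoint_isFixedPt
    simp only [Function.IsFixedPt] at this
    simp only [hg]
    exact sub_eq_iff_eq_add.2 this.symm
  have hid : ∀ x, x ∉ closedBall (0 : BrwE n) r → g x = x := fun x hx => by simp [hg, hs x hx]
  have himg : g '' closedBall (0 : BrwE n) r = closedBall (0 : BrwE n) r := by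
    apply Set.Subset.antisymm
    · rintro _ ⟨x, hx, rfl⟩
      by_contra h
      have := hinj (hid _ h)
      rw [this] at h
      exact h hx
    · intro y hy
      obtain ⟨x, rfl⟩ := hsurj y
      refine ⟨x, ?_, rfl⟩
      by_contra h
      rw [hid x h] at hy
      exact h hy
  have hderiv : ∀ x, HasFDerivAt g (ContinuousLinearMap.id ℝ (BrwE n) - t • fderiv ℝ f x) x := by
    intro x
    exact (hasFDerivAt_id x).sub (((hf.differentiable (by simp)) x).hasFDerivAt.const_smul t)
  have key := integral_image_eq_integral_abs_det_fderiv_smul volume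
    (s := closedBall (0 : BrwE n) r) measurableSet_closedBall
    (fun x _ => (hderiv x).hasFDerivWithinAt) hinj.injOn φ
  rw [himg] at key
  rw [key]
  apply integral_congr_ae
  filter_upwards with x
  have hpos : 0 < (ContinuousLinearMap.id ℝ (BrwE n) - t • fderiv ℝ f x).det := by
    apply hδ'
    rw [dist_eq_norm, sub_sub_cancel_left, norm_neg, norm_smul, Real.norm_of_nonneg ht0.le]
    have := norm_fderiv_le_of_lipschitz ℝ hK (x₀ := x)
    nlinarith
  rw [abs_of_pos hpos, smul_eq_mul, mul_comm]

lemma brw_identity {n : ℕ} (f : BrwE n → BrwE n) (hf : ContDiff ℝ 1 f) (r : ℝ)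
    (hs : ∀ x, x ∉ closedBall (0 : BrwE n) r → f x = 0) (c : ℝ) (k : ℕ) :
      ∫ x in closedBall (0 : BrwE n) r, (1 - c * ‖x - f x‖ ^ 2) ^ k *
          (ContinuousLinearMap.id ℝ (BrwE n) - fderiv ℝ f x).det
        = ∫ x in closedBall (0 : BrwE n) r, (1 - c * ‖x‖ ^ 2) ^ k := by
  obtain ⟨q, hq⟩ := brw_poly f hf c k
  obtain ⟨P, hP⟩ := brw_polyInt volume (closedBall (0 : BrwE n) r) (isCompact_closedBall _ _) q
  obtain ⟨t₀, ht₀, h⟩ := brw_small f hf r hs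
  have hPC : P = C (∫ x in closedBall (0 : BrwE n) r, (1 - c * ‖x‖ ^ 2) ^ k) := by
    apply eq_of_infinite_eval_eq
    apply (Set.Ioo_infinite ht₀).mono
    intro t ht
    simp only [Set.mem_ofPred_eq, eval_C]
    rw [← hP]
    simp only [hq]
    exact h t ht (fun y => (1 - c * ‖y‖ ^ 2) ^ k)
  have := hP 1
  rw [hPC] at this
  simpa [hq] using this

lemma brw_smooth {n : ℕ} (f : BrwE n → BrwE n) (hf : ContDiff ℝ 1 f) (r : ℝ) (hr : 0 < r)
    (hs : ∀ x, x ∉ closedBall (0 : BrwE n) r → f x = 0) : ∃ x, f x = x := by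
  by_contra! hne
  have hcs : HasCompactSupport f := HasCompactSupport.intro (isCompact_closedBall _ _) hs
  obtain ⟨R, hR⟩ := hcs.exists_bound_of_continuous hf.continuous
  have hfc := hf.continuous
  have hR0 : 0 ≤ R := (norm_nonneg _).trans (hR 0)
  set B := closedBall (0 : BrwE n) r with hB
  have hBc : IsCompact B := isCompact_closedBall _ _
  obtain ⟨x₀, -, hx₀⟩ := hBc.exists_isMinOn ⟨0, by simp [hB, hr.le]⟩
    (f := fun x => ‖x - f x‖) (by fun_prop)
  set ε := min ‖x₀ - f x₀‖ r with hε
  have hε0 : 0 < ε := lt_min (norm_pos_iff.2 (sub_ne_zero.2 (hne x₀).symm)) hr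
  have hεr : ε ≤ r := min_le_right _ _
  have hεg : ∀ x ∈ B, ε ≤ ‖x - f x‖ := fun x hx => (min_le_left _ _).trans (hx₀ hx)
  set L := r + R with hL
  have hL0 : 0 < L := by positivity
  set c := (L ^ 2)⁻¹ with hc
  have hc0 : 0 < c := by positivity
  have hcL : c * L ^ 2 = 1 := by rw [hc]; field_simp
  have hsq : ∀ s, 0 ≤ s → s ≤ L → 0 ≤ 1 - c * s ^ 2 := by
    intro s h0 h1
    have : s ^ 2 ≤ L ^ 2 := by gcongr
    nlinarith
  set a := 1 - c * ε ^ 2 with ha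
  set b := 1 - c * (ε / 2) ^ 2 with hb
  have ha0 : 0 ≤ a := hsq _ hε0.le (by linarith)
  have hab : a < b := by rw [ha, hb]; nlinarith [mul_pos hc0 (pow_pos hε0 2)]
  have hb0 : 0 < b := by linarith
  have hdc : Continuous fun x => (ContinuousLinearMap.id ℝ (BrwE n) - fderiv ℝ f x).det := by
    apply ContinuousLinearMap.continuous_det.comp
    exact continuous_const.sub (hf.continuous_fderiv (by simp))
  set J := fun x => (ContinuousLinearMap.id ℝ (BrwE n) - fderiv ℝ f x).det with hJ
  set S := ∫ x in B, |J x| with hS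
  set v := volume.real (closedBall (0 : BrwE n) (ε / 2)) with hv
  have hv0 : 0 < v := by
    rw [hv, measureReal_def]
    apply ENNReal.toReal_pos
    · exact (measure_closedBall_pos _ _ (by positivity)).ne'
    · exact measure_closedBall_lt_top.ne
  have main : ∀ k : ℕ, v * b ^ k ≤ S * a ^ k := by
    intro k
    have id := brw_identity f hf r hs c k
    have up : ∫ x in B, (1 - c * ‖x - f x‖ ^ 2) ^ k * J x ≤ S * a ^ k := by
      rw [hS, ← integral_mul_const]
      apply setIntegral_mono_on
      · exact (Continuous.continuousOn (by fun_prop)).integrableOn_compact hBc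
      · exact (Continuous.continuousOn (by fun_prop)).integrableOn_compact hBc
      · exact measurableSet_closedBall
      · intro x hx
        have h1 := hεg x hx
        have h2 : ‖x - f x‖ ≤ L := by
          have : ‖x‖ ≤ r := by simpa [hB] using hx
          linarith [norm_sub_le x (f x), hR x]
        have h3 := hsq _ (norm_nonneg _) h2
        have h4 : 1 - c * ‖x - f x‖ ^ 2 ≤ a := by rw [ha]; gcongr
        calc _ ≤ (1 - c * ‖x - f x‖ ^ 2) ^ k * |J x| := by
              gcongr
              exact le_abs_self _
          _ ≤ a ^ k * |J x| := by gcongr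
          _ = _ := mul_comm _ _
    have low : v * b ^ k ≤ ∫ x in B, (1 - c * ‖x‖ ^ 2) ^ k := by
      have hi : IntegrableOn (fun x : BrwE n => (1 - c * ‖x‖ ^ 2) ^ k) B :=
        (Continuous.continuousOn (by fun_prop)).integrableOn_compact hBc
      have hsub : closedBall (0 : BrwE n) (ε / 2) ⊆ B := closedBall_subset_closedBall (by linarith)
      calc v * b ^ k = ∫ x in closedBall (0 : BrwE n) (ε / 2), b ^ k := by
            simp [hv]
        _ ≤ ∫ x in closedBall (0 : BrwE n) (ε / 2), (1 - c * ‖x‖ ^ 2) ^ k := by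
            apply setIntegral_mono_on
            · exact (Continuous.continuousOn (by fun_prop)).integrableOn_compact (isCompact_closedBall _ _)
            · exact hi.mono_set hsub
            · exact measurableSet_closedBall
            · intro x hx
              have : ‖x‖ ≤ ε / 2 := by simpa using hx
              have : b ≤ 1 - c * ‖x‖ ^ 2 := by rw [hb]; gcongr
              gcongr
        _ ≤ _ := by
            apply setIntegral_mono_set hi _ hsub.eventuallyLE
            filter_upwards [ae_restrict_mem measurableSet_closedBall] with x hx
            have : ‖x‖ ≤ r := by simpa [hB] using hx
            exact pow_nonneg (hsq _ (norm_nonneg _) (by linarith)) k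
    linarith
  have hlim : Filter.Tendsto (fun k : ℕ => S * (a / b) ^ k) Filter.atTop (nhds (S * 0)) :=
    (tendsto_pow_atTop_nhds_zero_of_lt_one (by positivity) ((div_lt_one hb0).2 hab)).const_mul S
  have : v ≤ S * 0 := by
    apply ge_of_tendsto' hlim
    intro k
    rw [div_pow, ← mul_div_assoc, le_div_iff₀ (by positivity)]
    exact main k
  linarith

/-- A bounded continuous self-map of Euclidean space has a fixed point. -/
lemma brw_euclid {n : ℕ} (f : BrwE n → BrwE n) (hf : Continuous f) (R : ℝ)
    (hR : ∀ x, ‖f x‖ ≤ R) : ∃ x, f x = x := by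
  have hR0 : 0 ≤ R := (norm_nonneg _).trans (hR 0)
  by_contra! hne
  let χ : BrwE n → ℝ := fun x => max 0 (min 1 (R + 2 - ‖x‖))
  let h : BrwE n → BrwE n := fun x => χ x • f x
  have hχ1 : ∀ x, χ x ≤ 1 := fun x => by simp [χ]
  have hχ0 : ∀ x, 0 ≤ χ x := fun x => by simp [χ]
  have hhc : Continuous h := by fun_prop
  have hh : ∀ x, h x ≠ x := by
    intro x hx
    have h1 : ‖x‖ ≤ R := by
      calc ‖x‖ = χ x * ‖f x‖ := by
            conv_lhs => rw [← hx]
            simp only [h]; rw [norm_smul, Real.norm_of_nonneg (hχ0 x)]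
        _ ≤ 1 * R := by
            gcongr
            exacts [hχ1 x, hR x]
        _ = R := one_mul R
    have h2 : χ x = 1 := by
      simp only [χ]
      rw [min_eq_left (by linarith)]; simp
    apply hne x
    simpa [h, h2] using hx
  have hsupp : ∀ x, x ∉ closedBall (0 : BrwE n) (R + 2) → h x = 0 := by
    intro x hx
    have : R + 2 < ‖x‖ := by simpa using hx
    have : χ x = 0 := by
      simp only [χ]
      apply max_eq_left
      exact (min_le_right _ _).trans (by linarith)
    simp [h, this]
  obtain ⟨g, hg, hgd, hgs⟩ := hhc.exists_contDiff_approx 1 (ε := fun x => ‖h x - x‖) (by fun_prop)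
    (fun x => norm_pos_iff.2 (sub_ne_zero.2 (hh x)))
  obtain ⟨x, hx⟩ := brw_smooth g (by exact_mod_cast hg) (R + 2) (by linarith) (by
    intro x hx
    by_contra hc
    exact hgs hc (hsupp x hx))
  have := hgd x
  rw [hx, dist_eq_norm, norm_sub_rev] at this
  exact lt_irrefl _ this

lemma brw_findim {V : Type*} [NormedAddCommGroup V] [NormedSpace ℝ V] [FiniteDimensional ℝ V]
    (f : V → V) (hf : Continuous f) (R : ℝ) (hR : ∀ x, ‖f x‖ ≤ R) : ∃ x, f x = x := by
  let e : V ≃L[ℝ] BrwE (Module.finrank ℝ V) := toEuclidean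
  have hR0 : 0 ≤ R := (norm_nonneg _).trans (hR 0)
  obtain ⟨x, hx⟩ := brw_euclid (fun x => e (f (e.symm x))) (by fun_prop)
    (‖(e : V →L[ℝ] BrwE (Module.finrank ℝ V))‖ * R) (by
      intro x
      refine ((e : V →L[ℝ] BrwE (Module.finrank ℝ V)).le_opNorm (f (e.symm x))).trans ?_
      gcongr
      exact hR _)
  exact ⟨e.symm x, by rw [← e.symm_apply_apply (f (e.symm x)), hx]⟩

lemma brw_schauder {E : Type*} [NormedAddCommGroup E] [NormedSpace ℝ E]
    (S : E → E) (hS : Continuous S) (K : Set E) (hK : IsCompact K) (hSK : ∀ x, S x ∈ K)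
    (l : E → ℝ) (hl : Continuous l) (R : ℝ) (hlR : ∀ x, ‖l x • x‖ ≤ R) (ε : ℝ) (hε : 0 < ε) :
    ∃ x y : E, l y • y = x ∧ dist y (S x) ≤ ε := by
  classical
  obtain ⟨F, hF⟩ : ∃ F : Finset E, K ⊆ ⋃ y ∈ F, ball y ε := by
    obtain ⟨t, -, ht, h⟩ := hK.finite_cover_balls hε
    exact ⟨ht.toFinset, by simpa using h⟩
  let m : E → E → ℝ := fun y x => max 0 (ε - dist (S x) y)
  let W : E → ℝ := fun x => ∑ y ∈ F, m y x
  have hm0 : ∀ y x, 0 ≤ m y x := fun y x => le_max_left _ _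
  have hmc : ∀ y, Continuous (m y) := fun y => by fun_prop
  have hWc : Continuous W := continuous_finsetSum _ fun y _ => hmc y
  have hW : ∀ x, 0 < W x := by
    intro x
    obtain ⟨y, hy, hxy⟩ := Set.mem_iUnion₂.1 (hF (hSK x))
    apply Finset.sum_pos' (fun y _ => hm0 y x) ⟨y, hy, ?_⟩
    have : dist (S x) y < ε := hxy
    exact lt_max_of_lt_right (by linarith)
  let P : E → E := fun x => (W x)⁻¹ • ∑ y ∈ F, m y x • y
  have hPc : Continuous P := by
    apply (hWc.inv₀ fun x => (hW x).ne').smul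
    exact continuous_finsetSum _ fun y _ => (hmc y).smul continuous_const
  let V := Submodule.span ℝ (F : Set E)
  have hPV : ∀ x, P x ∈ V := fun x =>
    V.smul_mem _ (V.sum_mem fun y hy => V.smul_mem _ (Submodule.subset_span hy))
  have hPd : ∀ x, dist (P x) (S x) ≤ ε := by
    intro x
    have h1 : P x - S x = (W x)⁻¹ • ∑ y ∈ F, m y x • (y - S x) := by
      simp only [smul_sub, Finset.sum_sub_distrib, ← Finset.sum_smul, P]
      change _ = _ - (W x)⁻¹ • W x • S x
      rw [smul_smul, inv_mul_cancel₀ (hW x).ne', one_smul]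
    rw [dist_eq_norm, h1, norm_smul, norm_inv, Real.norm_of_nonneg (hW x).le, inv_mul_le_iff₀ (hW x)]
    calc _ ≤ ∑ y ∈ F, ‖m y x • (y - S x)‖ := norm_sum_le _ _
      _ ≤ ∑ y ∈ F, m y x * ε := by
        apply Finset.sum_le_sum
        intro y _
        rw [norm_smul, Real.norm_of_nonneg (hm0 y x)]
        by_cases h : dist (S x) y ≤ ε
        · rw [← dist_eq_norm, dist_comm]
          exact mul_le_mul_of_nonneg_left h (hm0 y x)
        · have : m y x = 0 := max_eq_left (by linarith)
          simp [this]
      _ = W x * ε := by rw [← Finset.sum_mul]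
  have : FiniteDimensional ℝ V := FiniteDimensional.span_finset ℝ F
  obtain ⟨x, hx⟩ := brw_findim (V := V) (fun v => ⟨l (P v) • P v, V.smul_mem _ (hPV v)⟩)
    (by
      apply Continuous.subtype_mk
      fun_prop) R (fun v => hlR _)
  exact ⟨x, P x, congrArg Subtype.val hx, hPd x⟩

end BrwHelpers

/-- **Schaefer's fixed point theorem.** Let `E` be a real Banach space and `T : E → E`
a continuous map which is compact (it maps bounded sets to relatively compact sets).
If there is a finite constant `M` such that every solution `e` of `e = λ • T e` with
`λ ∈ [0,1]` satisfies `‖e‖ ≤ M`, then `T` has a fixed point. -/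
theorem schaefer_fixed_point {E : Type*} [NormedAddCommGroup E] [NormedSpace ℝ E]
    [CompleteSpace E] (T : E → E) (hT_cont : Continuous T)
    (hT_compact : ∀ s : Set E, Bornology.IsBounded s → IsCompact (closure (T '' s)))
    (M : ℝ)
    (hM : ∀ lam : ℝ, lam ∈ Set.Icc (0 : ℝ) 1 → ∀ e : E, e = lam • T e → ‖e‖ ≤ M) :
    ∃ e : E, T e = e := by
  classical
  set R : ℝ := |M| + 1 with hRdef
  have hR : 0 < R := by positivity
  have hMR : M < R := by linarith [le_abs_self M]
  let l : E → ℝ := fun y => R / max R ‖y‖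
  have hmax : ∀ y : E, 0 < max R ‖y‖ := fun y => lt_max_of_lt_left hR
  have hl : Continuous l :=
    continuous_const.div (continuous_const.max continuous_norm) fun y => (hmax y).ne'
  have hl0 : ∀ y, 0 ≤ l y := fun y => div_nonneg hR.le (hmax y).le
  have hl1 : ∀ y, l y ≤ 1 := fun y => (div_le_one (hmax y)).2 (le_max_left _ _)
  have hlR : ∀ y, ‖l y • y‖ ≤ R := by
    intro y
    rw [norm_smul, Real.norm_of_nonneg (hl0 y)]
    simp only [l]
    rw [div_mul_eq_mul_div, div_le_iff₀ (hmax y)]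
    exact mul_le_mul_of_nonneg_left (le_max_right _ _) hR.le
  have hlid : ∀ y : E, ‖y‖ ≤ R → l y = 1 := by
    intro y hy
    simp only [l]
    rw [max_eq_left hy, div_self hR.ne']
  let S : E → E := fun x => T (l x • x)
  have hS : Continuous S := hT_cont.comp (hl.smul continuous_id)
  have hK := hT_compact (Metric.closedBall 0 R) Metric.isBounded_closedBall
  have hSK : ∀ x, S x ∈ closure (T '' Metric.closedBall 0 R) := fun x =>
    subset_closure ⟨l x • x, by simpa using hlR x, rfl⟩
  have hex : ∀ k : ℕ, ∃ x y : E, l y • y = x ∧ dist y (S x) ≤ 1 / ((k : ℝ) + 1) := fun k =>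
    brw_schauder S hS _ hK hSK l hl R hlR _ (by positivity)
  choose x y hxy hd using hex
  obtain ⟨z, -, φ, hφ, hz⟩ := hK.tendsto_subseq (fun k => hSK (x k))
  have hd0 : Filter.Tendsto (fun k => dist (S (x (φ k))) (y (φ k))) Filter.atTop (nhds 0) := by
    apply squeeze_zero (fun _ => dist_nonneg)
      (fun k => (dist_comm _ _).trans_le (hd (φ k)))
    exact tendsto_one_div_add_atTop_nhds_zero_nat.comp hφ.tendsto_atTop
  have hy : Filter.Tendsto (fun k => y (φ k)) Filter.atTop (nhds z) :=
    (tendsto_iff_of_dist hd0).1 hz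
  have hx : Filter.Tendsto (fun k => x (φ k)) Filter.atTop (nhds (l z • z)) := by
    have := ((hl.smul continuous_id).tendsto z).comp hy
    refine this.congr fun k => ?_
    exact hxy (φ k)
  have hSz : S (l z • z) = z := tendsto_nhds_unique ((hS.tendsto _).comp hx) hz
  have hTz : T (l z • z) = z := by
    have h1 := hlid _ (hlR z)
    simpa only [S, h1, one_smul] using hSz
  have hle : ‖l z • z‖ ≤ M := hM (l z) ⟨hl0 z, hl1 z⟩ _ (by rw [hTz])
  have hzR : ‖z‖ ≤ R := by
    by_contra! h
    have : ‖l z • z‖ = R := by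
      rw [norm_smul, Real.norm_of_nonneg (hl0 z)]
      simp only [l]
      rw [max_eq_right h.le, div_mul_cancel₀ _ (hR.trans h).ne']
    linarith
  refine ⟨z, ?_⟩
  simpa only [hlid z hzR, one_smul] using hTz
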